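/- Let q be a prime power and let C be an absolutely irreducible plane projective curve of degree q+1 defined over GF(q^2). If the number N of GF(q^2)-rational points of C satisfies N < q^3 + 1, then N <= q(q+1)^2/2. -/

import Mathlib

open MvPolynomial Module

/-- The set of points of the projective subspace of `PG(n-1, F)` determined by
the linear subspace `W` of `F^n`. -/
def projPts {F : Type} [Field F] {n : ℕ} (W : Submodule F (Fin n → F)) :
    Set (Projectivization F (Fin n → F)) :=
  {P | P.submodule ≤ W}

/-- The set of `F`-rational points of the hypersurface of `PG(n-1, F)` defined by the
homogeneous polynomial `f`. -/
def hypersurfacePts {F : Type} [Field F] {n : ℕ} (f : MvPolynomial (Fin n) F) :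
    Set (Projectivization F (Fin n → F)) :=
  {P | MvPolynomial.eval P.rep f = 0}

/-!
Let `Q = |F|`, let `f` have degree `d`, and set `g = ∑ Xᵢ^Q ∂ᵢf` (Stöhr–Voloch). On a line
`A + t B`, Euler's formula turns `g` into `d p + (t^Q - t) p'`, where `p` is the restriction of `f`.

If `f ∤ g`, then at every rational point both `f` and `g` meet a tangent line to the curve with
multiplicity at least two, so Bézout's theorem gives `2 N ≤ d (Q + d - 1)`.

If `f ∣ g`, choose a rational point `P` off the curve. On each of the `Q + 1` lines through `P`,
`p` divides `(t^Q - t) p'`, so `p / gcd(p, p')` is a product of distinct rational linear factors.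
The gcds are common zeros of `f` and of its polar with respect to `P`, so by Bézout their degrees
add up to at most `d (d - 1)`, and `N ≥ d (Q + 1) - d (d - 1) = d (Q + 2 - d)`.

The required form of Bézout's theorem is a dimension count: the forms of large degree surject onto
the functions on any finite family of schemes on lines that are separated by forms, while the
forms lying in the ideal `(f, g)` have codimension at most `d e`.
-/

open scoped Polynomial

lemma isLocalHom_mvPolynomial_map {σ R S : Type*} [CommRing R] [CommRing S] (φ : R →+* S)
    [IsLocalHom φ] (hφ : Function.Injective φ) :
    IsLocalHom (MvPolynomial.map φ : MvPolynomial σ R →+* MvPolynomial σ S) where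
  map_nonunit f := by
    simp only [MvPolynomial.isUnit_iff, coeff_map, isUnit_map_iff, IsNilpotent.map_iff hφ, imp_self]

section Homogeneous

lemma isHomogeneous_of_mul_left {σ R : Type*} [CommRing R] [IsDomain R] {f g : MvPolynomial σ R}
    {d m : ℕ} (hf : f.IsHomogeneous d) (hf0 : f ≠ 0) (hfg : (f * g).IsHomogeneous (d + m)) :
    g.IsHomogeneous m := by
  let : GradedAlgebra (homogeneousSubmodule σ R) := gradedAlgebra
  have hcomp : homogeneousComponent (d + m) (f * g) = f * homogeneousComponent m g := by
    rw [← decomposition.decompose'_apply, ← decomposition.decompose'_apply]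
    exact DirectSum.coe_decompose_mul_add_of_left_mem (homogeneousSubmodule σ R) hf
  rw [homogeneousComponent_eq_self hfg] at hcomp
  rw [mul_left_cancel₀ hf0 hcomp]
  exact homogeneousComponent_isHomogeneous m g

lemma eval_smul_of_isHomogeneous {σ R : Type*} [CommSemiring R] {f : MvPolynomial σ R} {n : ℕ}
    (hf : f.IsHomogeneous n) (c : R) (v : σ → R) : eval (c • v) f = c ^ n * eval v f := by
  rw [eval_eq, eval_eq, Finset.mul_sum]
  refine Finset.sum_congr rfl fun s hs => ?_
  have hdeg : ∑ i ∈ s.support, s i = n := (hf.degree_eq_sum_deg_support hs).symm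
  simp only [Pi.smul_apply, smul_eq_mul, mul_pow, Finset.prod_mul_distrib,
    Finset.prod_pow_eq_pow_sum, hdeg]
  ring

lemma ne_zero_of_isHomogeneous_of_eval_ne_zero {σ R : Type*} [CommSemiring R]
    {f : MvPolynomial σ R} {n : ℕ} (hf : f.IsHomogeneous n) (hn : n ≠ 0) {v : σ → R}
    (hv : eval v f ≠ 0) : v ≠ 0 := by
  rintro rfl
  have h0 := eval_smul_of_isHomogeneous hf 0 (0 : σ → R)
  rw [smul_zero, zero_pow hn, zero_mul] at h0
  exact hv h0

lemma finrank_homogeneousSubmodule {σ : Type*} [Fintype σ] (R : Type*) [CommRing R] [Nontrivial R]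
    (n : ℕ) : finrank R (homogeneousSubmodule σ R n) = (Fintype.card σ).multichoose n := by
  classical
  have hdeg : {s : σ →₀ ℕ | s.degree = n} =
      ((Finset.univ : Finset σ).finsuppAntidiag n : Set (σ →₀ ℕ)) := by
    ext s
    simp [Finset.mem_finsuppAntidiag, Finsupp.degree_eq_sum]
  have e := (LinearEquiv.ofEq _ _ (homogeneousSubmodule_eq_finsupp_supported σ R n)).trans
    (AddMonoidAlgebra.supportedEquivFinsupp _)
  rw [hdeg] at e
  rw [e.finrank_eq, finrank_finsupp_self]
  simp only [Finset.coe_sort_coe, Fintype.card_coe,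
    Finset.card_finsuppAntidiag_nat_eq_multichoose, Finset.card_univ]

lemma two_mul_finrank_homogeneousSubmodule_fin_three (R : Type*) [CommRing R] [Nontrivial R]
    (n : ℕ) : 2 * finrank R (homogeneousSubmodule (Fin 3) R n) = (n + 1) * (n + 2) := by
  rw [finrank_homogeneousSubmodule, Fintype.card_fin, Nat.multichoose_eq,
    show 3 + n - 1 = n + 2 by omega, Nat.choose_symm_add, Nat.choose_two_right,
    Nat.mul_div_cancel' (Nat.even_mul_pred_self (n + 2)).two_dvd]
  simp only [Nat.add_one_sub_one]
  ring

variable {σ F : Type*} [Field F]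

lemma finiteDimensional_homogeneousSubmodule [Finite σ] (n : ℕ) :
    FiniteDimensional F (homogeneousSubmodule σ F n) :=
  Module.Finite.iff_fg.mpr (homogeneousSubmodule_fg σ F n)

lemma mul_homogeneousSubmodule_inf_mul_le {f g : MvPolynomial σ F} {d e m : ℕ}
    (hf : f.IsHomogeneous d) (hf0 : f ≠ 0) (hfg : IsRelPrime f g) :
    (homogeneousSubmodule σ F (e + m)).map (LinearMap.mulLeft F f) ⊓
        (homogeneousSubmodule σ F (d + m)).map (LinearMap.mulLeft F g) ≤
      (homogeneousSubmodule σ F m).map (LinearMap.mulLeft F (f * g)) := by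
  rintro _ ⟨⟨a, -, rfl⟩, b, hb, hab⟩
  simp only [LinearMap.mulLeft_apply] at hab ⊢
  obtain ⟨c, rfl⟩ := hfg.dvd_of_dvd_mul_left ⟨a, hab⟩
  refine ⟨c, isHomogeneous_of_mul_left hf hf0 hb, ?_⟩
  rw [LinearMap.mulLeft_apply, ← hab]
  ring

/-- The homogeneous part of degree `d + e + m` of the ideal `(f, g)`, where `f` and `g` are
homogeneous of degrees `d` and `e`. -/
noncomputable def pairIdealPart (f g : MvPolynomial σ F) (d e m : ℕ) :
    Submodule F (MvPolynomial σ F) :=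
  (homogeneousSubmodule σ F (e + m)).map (LinearMap.mulLeft F f) ⊔
    (homogeneousSubmodule σ F (d + m)).map (LinearMap.mulLeft F g)

lemma pairIdealPart_le_homogeneousSubmodule {f g : MvPolynomial σ F} {d e m : ℕ}
    (hf : f.IsHomogeneous d) (hg : g.IsHomogeneous e) :
    pairIdealPart f g d e m ≤ homogeneousSubmodule σ F (d + e + m) := by
  refine sup_le ?_ ?_
  · rintro _ ⟨a, ha, rfl⟩
    exact (add_assoc d e m) ▸ hf.mul ha
  · rintro _ ⟨b, hb, rfl⟩
    exact (add_left_comm e d m).trans (add_assoc d e m).symm ▸ hg.mul hb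

lemma finrank_add_finrank_le_finrank_pairIdealPart_add [Finite σ] {f g : MvPolynomial σ F}
    {d e m : ℕ} (hf : f.IsHomogeneous d) (hf0 : f ≠ 0) (hg0 : g ≠ 0) (hfg : IsRelPrime f g) :
    finrank F (homogeneousSubmodule σ F (e + m)) + finrank F (homogeneousSubmodule σ F (d + m)) ≤
      finrank F (pairIdealPart f g d e m) + finrank F (homogeneousSubmodule σ F m) := by
  have := finiteDimensional_homogeneousSubmodule (σ := σ) (F := F)
  have hfinrank : ∀ {h : MvPolynomial σ F}, h ≠ 0 → ∀ n,
      finrank F ((homogeneousSubmodule σ F n).map (LinearMap.mulLeft F h)) =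
        finrank F (homogeneousSubmodule σ F n) := fun hh n =>
    ((homogeneousSubmodule σ F n).equivMapOfInjective _
      (mul_right_injective₀ hh)).finrank_eq.symm
  have hdim := Submodule.finrank_sup_add_finrank_inf_eq
    ((homogeneousSubmodule σ F (e + m)).map (LinearMap.mulLeft F f))
    ((homogeneousSubmodule σ F (d + m)).map (LinearMap.mulLeft F g))
  have hinf := Submodule.finrank_mono
    (mul_homogeneousSubmodule_inf_mul_le (e := e) (m := m) hf hf0 hfg)
  rw [hfinrank (mul_ne_zero hf0 hg0)] at hinf
  rw [hfinrank hf0, hfinrank hg0] at hdim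
  rw [pairIdealPart]
  omega

lemma finrank_le_mul_of_homogeneous_surjective {f g : MvPolynomial (Fin 3) F} {d e m : ℕ}
    (hf : f.IsHomogeneous d) (hg : g.IsHomogeneous e) (hf0 : f ≠ 0) (hg0 : g ≠ 0)
    (hfg : IsRelPrime f g) {V : Type*} [AddCommGroup V] [Module F V]
    (T : MvPolynomial (Fin 3) F →ₗ[F] V) (hTf : ∀ w, T (f * w) = 0) (hTg : ∀ w, T (g * w) = 0)
    (hT : ∀ v, ∃ w : MvPolynomial (Fin 3) F, w.IsHomogeneous (d + e + m) ∧ T w = v) :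
    finrank F V ≤ d * e := by
  have := finiteDimensional_homogeneousSubmodule (σ := Fin 3) (F := F)
  have hrange : (T.domRestrict (homogeneousSubmodule (Fin 3) F (d + e + m))).range = ⊤ := by
    refine LinearMap.range_eq_top.mpr fun v => ?_
    obtain ⟨w, hw, rfl⟩ := hT v
    exact ⟨⟨w, hw⟩, rfl⟩
  have hker : pairIdealPart f g d e m ≤
      (T.domRestrict (homogeneousSubmodule (Fin 3) F (d + e + m))).ker.map
        (homogeneousSubmodule (Fin 3) F (d + e + m)).subtype := by
    intro w hw
    refine ⟨⟨w, pairIdealPart_le_homogeneousSubmodule hf hg hw⟩, ?_, rfl⟩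
    suffices pairIdealPart f g d e m ≤ T.ker from this hw
    refine sup_le ?_ ?_ <;> rintro _ ⟨a, -, rfl⟩
    exacts [hTf a, hTg a]
  have hnullity := LinearMap.finrank_range_add_finrank_ker
    (T.domRestrict (homogeneousSubmodule (Fin 3) F (d + e + m)))
  rw [hrange, finrank_top] at hnullity
  have hker_le := Submodule.finrank_mono hker
  rw [Submodule.finrank_map_subtype_eq] at hker_le
  have hideal := finrank_add_finrank_le_finrank_pairIdealPart_add (e := e) (m := m) hf hf0 hg0 hfg
  have hdim := two_mul_finrank_homogeneousSubmodule_fin_three F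
  -- With `s n` the dimension of the space of forms of degree `n`,
  -- `s (d + e + m) + s m - s (e + m) - s (d + m) = d * e`.
  nlinarith only [hnullity, hker_le, hideal, hdim (d + e + m), hdim (e + m), hdim (d + m), hdim m]

end Homogeneous

section LineRestriction

variable {σ R : Type*} [CommRing R]

/-- The restriction of a polynomial to the line through `A` and `B`, as a polynomial in the
parameter `t` of the point `A + t B`. -/
noncomputable def restrictLine (A B : σ → R) : MvPolynomial σ R →ₐ[R] R[X] :=
  aeval fun i => .C (A i) + .X * .C (B i)

@[simp]
lemma restrictLine_X (A B : σ → R) (i : σ) :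
    restrictLine A B (X i) = .C (A i) + .X * .C (B i) :=
  aeval_X _ i

@[simp]
lemma restrictLine_C (A B : σ → R) (a : R) : restrictLine A B (C a) = .C a :=
  aeval_C _ a

lemma eval_restrictLine (A B : σ → R) (f : MvPolynomial σ R) (t : R) :
    (restrictLine A B f).eval t = eval (A + t • B) f := by
  induction f using MvPolynomial.induction_on with
  | C a => simp
  | add f g hf hg => simp [hf, hg]
  | mul_X f i hf => simp [hf, mul_comm t]

lemma natDegree_restrictLine_le (A B : σ → R) (f : MvPolynomial σ R) :
    (restrictLine A B f).natDegree ≤ f.totalDegree := by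
  refine (aeval_natDegree_le f le_rfl _ (n := 1) fun i => ?_).trans_eq (mul_one _)
  compute_degree

lemma coeff_restrictLine_monomial_one (A B : σ → R) (s : σ →₀ ℕ) :
    (restrictLine A B (monomial s 1)).coeff s.degree = eval B (monomial s 1) := by
  induction s using Finsupp.induction_linear with
  | zero => simp
  | add s t hs ht =>
    have hdeg : ∀ u : σ →₀ ℕ, (restrictLine A B (monomial u 1)).natDegree ≤ u.degree := fun u =>
      (natDegree_restrictLine_le A B _).trans (totalDegree_monomial_le u 1)
    have hmul : monomial (s + t) (1 : R) = monomial s 1 * monomial t 1 := by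
      rw [monomial_mul, mul_one]
    rw [hmul, map_mul, map_mul, map_add,
      Polynomial.coeff_mul_add_eq_of_natDegree_le (hdeg s) (hdeg t), hs, ht]
  | single i k =>
    have hdeg : (.C (A i) + .X * .C (B i) : R[X]).natDegree ≤ 1 := by compute_degree
    have hcoeff := Polynomial.coeff_pow_of_natDegree_le hdeg (m := k)
    rw [← C_mul_X_pow_eq_monomial]
    simpa using hcoeff

lemma coeff_restrictLine {f : MvPolynomial σ R} {n : ℕ} (hf : f.IsHomogeneous n) (A B : σ → R) :
    (restrictLine A B f).coeff n = eval B f := by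
  rw [f.as_sum, map_sum, map_sum, Polynomial.finsetSum_coeff]
  refine Finset.sum_congr rfl fun s hs => ?_
  have hdeg : s.degree = n := (hf.degree_eq_sum_deg_support hs).symm
  have hmonomial : monomial s (f.coeff s) = C (f.coeff s) * monomial s 1 := by
    rw [C_mul_monomial, mul_one]
  rw [hmonomial, map_mul, map_mul, restrictLine_C, Polynomial.coeff_C_mul, eval_C, ← hdeg,
    coeff_restrictLine_monomial_one]

/-- The linear form `∑ φ(eᵢ) Xᵢ` with values `φ`. -/
noncomputable def linearForm [Fintype σ] [DecidableEq σ] (φ : Dual R (σ → R)) : MvPolynomial σ R :=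
  ∑ i, C (φ (Pi.single i 1)) * X i

lemma isHomogeneous_linearForm [Fintype σ] [DecidableEq σ] (φ : Dual R (σ → R)) :
    (linearForm φ).IsHomogeneous 1 :=
  .sum _ _ _ fun i _ => isHomogeneous_C_mul_X _ i

lemma restrictLine_linearForm [Fintype σ] [DecidableEq σ] (A B : σ → R) (φ : Dual R (σ → R)) :
    restrictLine A B (linearForm φ) = .C (φ A) + .X * .C (φ B) := by
  have hφ : ∀ v, φ v = ∑ i, φ (Pi.single i 1) * v i := fun v => by
    conv_lhs => rw [pi_eq_sum_univ' v]
    simp [mul_comm]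
  rw [hφ A, hφ B, linearForm]
  simp only [map_sum, map_mul, restrictLine_C, restrictLine_X, Finset.mul_sum,
    ← Finset.sum_add_distrib]
  exact Finset.sum_congr rfl fun i _ => by ring

variable [Fintype σ]

/-- The polar `∑ Pᵢ ∂ᵢf` of the point `P` with respect to the hypersurface `f = 0`. -/
noncomputable def polar (P : σ → R) (f : MvPolynomial σ R) : MvPolynomial σ R :=
  ∑ i, C (P i) * pderiv i f

/-- The Stöhr–Voloch polynomial `∑ Xᵢ^Q ∂ᵢf`, which vanishes at the points of the hypersurface
`f = 0` whose tangent space contains their image under the `Q`-Frobenius. -/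
noncomputable def frobeniusPolar (Q : ℕ) (f : MvPolynomial σ R) : MvPolynomial σ R :=
  ∑ i, X i ^ Q * pderiv i f

lemma isHomogeneous_polar {f : MvPolynomial σ R} {d : ℕ} (hf : f.IsHomogeneous d) (P : σ → R) :
    (polar P f).IsHomogeneous (d - 1) :=
  .sum _ _ _ fun i _ => hf.pderiv.C_mul (P i)

lemma isHomogeneous_frobeniusPolar {f : MvPolynomial σ R} {d : ℕ} (hf : f.IsHomogeneous d)
    (Q : ℕ) : (frobeniusPolar Q f).IsHomogeneous (Q + (d - 1)) :=
  .sum _ _ _ fun i _ => (isHomogeneous_X_pow i Q).mul hf.pderiv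

lemma eval_polar_self {f : MvPolynomial σ R} {d : ℕ} (hf : f.IsHomogeneous d) (P : σ → R) :
    eval P (polar P f) = d * eval P f := by
  simpa [polar] using congrArg (eval P) hf.sum_X_mul_pderiv

lemma not_dvd_polar [IsDomain R] {f : MvPolynomial σ R} {d : ℕ} {P : σ → R}
    (hf : f.IsHomogeneous d) (hd : d ≠ 0) (hpolar : polar P f ≠ 0) : ¬ f ∣ polar P f := by
  intro hdvd
  have hf0 : f ≠ 0 := fun h => hpolar (by simp [polar, h])
  have hdeg := totalDegree_le_of_dvd_of_isDomain hdvd hpolar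
  rw [hf.totalDegree hf0, (isHomogeneous_polar hf P).totalDegree hpolar] at hdeg
  omega

lemma derivative_restrictLine (A B : σ → R) (f : MvPolynomial σ R) :
    (restrictLine A B f).derivative = restrictLine A B (polar B f) := by
  classical
  induction f using MvPolynomial.induction_on with
  | C a => simp [polar]
  | add f g hf hg => simp [polar, hf, hg, mul_add, Finset.sum_add_distrib]
  | mul_X f i hf =>
    have hpolar : polar B (f * X i) = polar B f * X i + f * C (B i) := by
      have hsum : ∑ j, C (B j) * (f * pderiv j (X i)) = f * C (B i) := by
        rw [Finset.sum_eq_single i (fun j _ hj => by rw [pderiv_X_of_ne hj.symm]; simp) (by simp)]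
        simp [mul_comm]
      simp only [polar, pderiv_mul, mul_add, Finset.sum_add_distrib, hsum, Finset.sum_mul,
        mul_assoc]
    simp [hpolar, hf]

lemma restrictLine_frobeniusPolar {F : Type*} [Field F] [Fintype F] {f : MvPolynomial σ F} {d : ℕ}
    (hf : f.IsHomogeneous d) (A B : σ → F) :
    restrictLine A B (frobeniusPolar (Fintype.card F) f) = d • restrictLine A B f +
      (.X ^ Fintype.card F - .X) * (restrictLine A B f).derivative := by
  rw [derivative_restrictLine, ← map_nsmul, ← hf.sum_X_mul_pderiv, frobeniusPolar, polar]
  simp only [map_sum, map_mul, map_pow, restrictLine_X, restrictLine_C, Finset.mul_sum,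
    ← Finset.sum_add_distrib, ← FiniteField.expand_card]
  refine Finset.sum_congr rfl fun i _ => ?_
  simp
  ring

end LineRestriction

section Interpolation

lemma exists_dual_family {ι K V : Type*} [Finite ι] [DecidableEq ι] [Field K] [AddCommGroup V]
    [Module K V] {v : ι → V} (hv : LinearIndependent K v) :
    ∃ φ : ι → Dual K V, ∀ i j, φ i (v j) = Pi.single (M := fun _ => K) j 1 i := by
  have := Fintype.ofFinite ι
  obtain ⟨g, hg⟩ := LinearMap.exists_leftInverse_of_injective (Fintype.linearCombination K v)
    (LinearMap.ker_eq_bot.mpr (linearIndependent_iff_injective_fintypeLinearCombination.mp hv))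
  refine ⟨fun i => LinearMap.proj i ∘ₗ g, fun i j => ?_⟩
  have hgv : g (v j) = Pi.single j 1 := by
    simpa using LinearMap.congr_fun hg (Pi.single j 1)
  simp [hgv]

variable {σ F : Type*} [Field F]

lemma exists_isHomogeneous_restrictLine_eq [Finite σ] {A B : σ → F}
    (hAB : LinearIndependent F ![A, B]) {p : F[X]} {n : ℕ} (hn : p.natDegree ≤ n) :
    ∃ w : MvPolynomial σ F, w.IsHomogeneous n ∧ restrictLine A B w = p := by
  classical
  have := Fintype.ofFinite σ
  obtain ⟨φ, hφ⟩ := exists_dual_family hAB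
  have hhom : ∀ i, (![linearForm (φ 1), linearForm (φ 0)] i).IsHomogeneous 1 :=
    Fin.forall_fin_two.mpr ⟨isHomogeneous_linearForm _, isHomogeneous_linearForm _⟩
  have hres : (fun i => restrictLine A B (![linearForm (φ 1), linearForm (φ 0)] i)) =
      ![.X, 1] := by
    have hA := fun i => hφ i 0
    have hB := fun i => hφ i 1
    simp only [Matrix.cons_val_zero, Matrix.cons_val_one] at hA hB
    ext1 i
    fin_cases i <;> simp [restrictLine_linearForm, hA, hB]
  refine ⟨aeval ![linearForm (φ 1), linearForm (φ 0)] (p.homogenize n), ?_, ?_⟩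
  · simpa only [one_mul] using (Polynomial.isHomogeneous_homogenize p).aeval _ hhom
  · rw [← AlgHom.comp_apply, comp_aeval, hres]
    exact Polynomial.aeval_homogenize_X_one p hn

variable {ι : Type*} {A B : ι → σ → F} {h : ι → F[X]} {r : ℕ}

/-- The zero-dimensional schemes `h i = 0` on the lines `A i + t B i` are pairwise separated by
forms of degree `r`: for `k ≠ i` some form of degree `r` vanishes on the `k`-th scheme and has no
zero on the `i`-th. -/
def SeparatedByForms (A B : ι → σ → F) (h : ι → F[X]) (r : ℕ) : Prop :=
  ∀ i k, k ≠ i → ∃ s : MvPolynomial σ F, s.IsHomogeneous r ∧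
    h k ∣ restrictLine (A k) (B k) s ∧ IsCoprime (h i) (restrictLine (A i) (B i) s)

lemma SeparatedByForms.exists_isHomogeneous_isCoprime [Fintype ι] (hsep : SeparatedByForms A B h r)
    (i : ι) : ∃ s : MvPolynomial σ F, s.IsHomogeneous ((Fintype.card ι - 1) * r) ∧
      (∀ k ≠ i, h k ∣ restrictLine (A k) (B k) s) ∧
      IsCoprime (h i) (restrictLine (A i) (B i) s) := by
  classical
  choose! s hsr hsk hsi using hsep
  refine ⟨∏ k ∈ Finset.univ.erase i, s i k, ?_, fun k hk => ?_, ?_⟩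
  · have hprod := IsHomogeneous.prod (Finset.univ.erase i) (s i) (fun _ => r) fun k hk =>
      hsr i k (Finset.ne_of_mem_erase hk)
    rwa [Finset.sum_const, Finset.card_erase_of_mem (Finset.mem_univ i), Finset.card_univ,
      smul_eq_mul] at hprod
  · rw [map_prod]
    exact (hsk i k hk).trans
      (Finset.dvd_prod_of_mem _ (Finset.mem_erase.mpr ⟨hk, Finset.mem_univ k⟩))
  · rw [map_prod]
    exact IsCoprime.prod_right fun k hk => hsi i k (Finset.ne_of_mem_erase hk)

lemma SeparatedByForms.exists_isHomogeneous_dvd_sub [Finite σ] [Fintype ι]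
    (hsep : SeparatedByForms A B h r) (hAB : ∀ i, LinearIndependent F ![A i, B i])
    (h0 : ∀ i, h i ≠ 0) {n : ℕ}
    (hn : (Fintype.card ι - 1) * r + ∑ i, (h i).natDegree ≤ n) (p : ι → F[X]) :
    ∃ w : MvPolynomial σ F, w.IsHomogeneous n ∧ ∀ i, h i ∣ restrictLine (A i) (B i) w - p i := by
  choose s hs hsk hsi using hsep.exists_isHomogeneous_isCoprime
  choose a b hab using hsi
  have hdeg : ∀ i, (p i * b i % h i).natDegree ≤ n - (Fintype.card ι - 1) * r := fun i => by
    have hsum : (h i).natDegree ≤ ∑ i, (h i).natDegree :=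
      Finset.single_le_sum (f := fun i => (h i).natDegree) (fun _ _ => Nat.zero_le _)
        (Finset.mem_univ i)
    have hmod := Polynomial.natDegree_le_natDegree
      (EuclideanDomain.mod_lt (p i * b i) (h0 i)).le
    omega
  choose w hw hwres using fun i => exists_isHomogeneous_restrictLine_eq (hAB i) (hdeg i)
  refine ⟨∑ k, s k * w k, IsHomogeneous.sum _ _ _ fun k _ => ?_, fun i => ?_⟩
  · have hmul := (hs k).mul (hw k)
    rwa [Nat.add_sub_cancel' (by omega)] at hmul
  · classical
    have hi : h i ∣ restrictLine (A i) (B i) (s i * w i) - p i := by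
      refine ⟨-(a i * p i) - restrictLine (A i) (B i) (s i) * (p i * b i / h i), ?_⟩
      rw [map_mul, hwres]
      linear_combination p i * hab i +
        restrictLine (A i) (B i) (s i) * EuclideanDomain.div_add_mod (p i * b i) (h i)
    rw [map_sum, ← Finset.add_sum_erase _ _ (Finset.mem_univ i), add_sub_right_comm]
    refine hi.add (Finset.dvd_sum fun k hk => ?_)
    rw [map_mul]
    exact (hsk k i (Finset.ne_of_mem_erase hk).symm).mul_right _

-- Bézout's theorem for the part of the intersection of `f = 0` and `g = 0` lying on the lines.
lemma SeparatedByForms.sum_natDegree_le_mul [Fintype ι] {A B : ι → Fin 3 → F} {h : ι → F[X]}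
    {r d e : ℕ} (hsep : SeparatedByForms A B h r) (hAB : ∀ i, LinearIndependent F ![A i, B i])
    (h0 : ∀ i, h i ≠ 0) {f g : MvPolynomial (Fin 3) F} (hf : f.IsHomogeneous d)
    (hg : g.IsHomogeneous e) (hf0 : f ≠ 0) (hg0 : g ≠ 0) (hfg : IsRelPrime f g)
    (hhf : ∀ i, h i ∣ restrictLine (A i) (B i) f) (hhg : ∀ i, h i ∣ restrictLine (A i) (B i) g) :
    ∑ i, (h i).natDegree ≤ d * e := by
  let T : MvPolynomial (Fin 3) F →ₗ[F] (∀ i, AdjoinRoot (h i)) :=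
    LinearMap.pi fun i => (AdjoinRoot.mkₐ (h i)).toLinearMap ∘ₗ
      (restrictLine (A i) (B i)).toLinearMap
  have hT : ∀ w i, T w i = AdjoinRoot.mk (h i) (restrictLine (A i) (B i) w) := fun _ _ => rfl
  have (i : ι) : Module.Finite F (AdjoinRoot (h i)) := (AdjoinRoot.powerBasis (h0 i)).finite
  have hfinrank : finrank F (∀ i, AdjoinRoot (h i)) = ∑ i, (h i).natDegree := by
    simp only [finrank_pi_fintype, (AdjoinRoot.powerBasis (h0 _)).finrank,
      AdjoinRoot.powerBasis_dim]
  have hker : ∀ u : MvPolynomial (Fin 3) F, (∀ i, h i ∣ restrictLine (A i) (B i) u) →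
      ∀ w, T (u * w) = 0 := fun u hu w => funext fun i => by
    rw [hT, map_mul, Pi.zero_apply, AdjoinRoot.mk_eq_zero]
    exact (hu i).mul_right _
  rw [← hfinrank]
  refine finrank_le_mul_of_homogeneous_surjective
    (m := (Fintype.card ι - 1) * r + ∑ i, (h i).natDegree) hf hg hf0 hg0 hfg T
    (hker f hhf) (hker g hhg) fun v => ?_
  choose p hp using fun i => AdjoinRoot.mk_surjective (v i)
  obtain ⟨w, hw, hwp⟩ := hsep.exists_isHomogeneous_dvd_sub hAB h0 (Nat.le_add_left _ (d + e)) p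
  refine ⟨w, hw, funext fun i => ?_⟩
  rw [hT, ← hp, AdjoinRoot.mk_eq_mk]
  exact hwp i

end Interpolation

section TangentLines

variable {F : Type*} [Field F]

lemma exists_dual_rep_eq_zero_of_ne {V : Type*} [AddCommGroup V] [Module F V]
    {P P' : Projectivization F V} (hne : P' ≠ P) :
    ∃ φ : Dual F V, φ P'.rep = 0 ∧ φ P.rep ≠ 0 := by
  have hP : P.rep ∉ F ∙ P'.rep := fun hmem => by
    obtain ⟨a, ha⟩ := Submodule.mem_span_singleton.mp hmem
    have hmk := (Projectivization.mk_eq_mk_iff' F P.rep P'.rep P.rep_nonzero P'.rep_nonzero).mpr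
      ⟨a, ha⟩
    rw [Projectivization.mk_rep, Projectivization.mk_rep] at hmk
    exact hne hmk.symm
  obtain ⟨φ, hφP, hφ⟩ := Submodule.exists_le_ker_of_notMem hP
  exact ⟨φ, hφ (Submodule.mem_span_singleton_self _), hφP⟩

lemma isCoprime_X_C_add_X_mul_C {a : F} (ha : a ≠ 0) (b : F) :
    IsCoprime (.X : F[X]) (.C a + .X * .C b) :=
  .add_mul_left_right ((isCoprime_one_right.of_isCoprime_of_dvd_right
    (Polynomial.isUnit_C.mpr ha.isUnit).dvd)) _

lemma exists_linearIndependent_X_sq_dvd_restrictLine {σ : Type*} [Fintype σ]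
    (hσ : 3 ≤ Fintype.card σ) {f : MvPolynomial σ F} {A : σ → F} (hA : A ≠ 0)
    (hfA : eval A f = 0) :
    ∃ B, LinearIndependent F ![A, B] ∧ .X ^ 2 ∣ restrictLine A B f := by
  let φ : Dual F (σ → F) := Fintype.linearCombination F fun i => eval A (pderiv i f)
  have hφ : ∀ B, φ B = eval A (polar B f) := fun B => by
    simp [φ, polar, Fintype.linearCombination_apply]
  have hker : ¬ φ.ker ≤ F ∙ A := fun hle => by
    have hle := Submodule.finrank_mono hle
    rw [finrank_span_singleton hA] at hle
    have hnullity := φ.finrank_range_add_finrank_ker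
    have hrange := Submodule.finrank_le φ.range
    rw [finrank_self] at hrange
    rw [finrank_fintype_fun_eq_card] at hnullity
    omega
  obtain ⟨B, hB, hBA⟩ := SetLike.not_le_iff_exists.mp hker
  refine ⟨B, (LinearIndependent.pair_iff' hA).mpr fun a ha =>
    hBA (Submodule.mem_span_singleton.mpr ⟨a, ha⟩), Polynomial.X_pow_dvd_iff.mpr fun k hk => ?_⟩
  have hcoeff : ∀ u : MvPolynomial σ F, (restrictLine A B u).coeff 0 = eval A u := fun u => by
    rw [Polynomial.coeff_zero_eq_eval_zero, eval_restrictLine, zero_smul, add_zero]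
  interval_cases k
  · rw [hcoeff, hfA]
  · have hderiv := Polynomial.coeff_derivative (restrictLine A B f) 0
    rw [derivative_restrictLine, hcoeff, ← hφ, LinearMap.mem_ker.mp hB] at hderiv
    simpa using hderiv.symm

lemma X_sq_dvd_restrictLine_frobeniusPolar {σ : Type*} [Fintype σ] [Fintype F]
    {f : MvPolynomial σ F} {d : ℕ} (hf : f.IsHomogeneous d) {A B : σ → F}
    (h : .X ^ 2 ∣ restrictLine A B f) :
    .X ^ 2 ∣ restrictLine A B (frobeniusPolar (Fintype.card F) f) := by
  rw [restrictLine_frobeniusPolar hf]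
  refine dvd_add (dvd_smul_of_dvd d h) ?_
  rw [pow_two]
  exact mul_dvd_mul (dvd_sub (dvd_pow_self _ Fintype.card_ne_zero) dvd_rfl)
    (by simpa using Polynomial.pow_sub_one_dvd_derivative_of_pow_dvd h)

lemma separatedByForms_rep_X_sq {σ : Type*} [Finite σ] {ι : Type*}
    {P : ι → Projectivization F (σ → F)} (hP : P.Injective) (B : ι → σ → F) :
    SeparatedByForms (fun i => (P i).rep) B (fun _ => .X ^ 2) 2 := fun i k hne => by
  classical
  have := Fintype.ofFinite σ
  obtain ⟨φ, hφk, hφi⟩ := exists_dual_rep_eq_zero_of_ne (hP.ne hne)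
  refine ⟨linearForm φ ^ 2, by simpa using (isHomogeneous_linearForm φ).pow 2, ?_, ?_⟩
  · rw [map_pow, restrictLine_linearForm, hφk]
    exact pow_dvd_pow_of_dvd (by simp) 2
  · rw [map_pow, restrictLine_linearForm]
    exact (isCoprime_X_C_add_X_mul_C hφi _).pow

end TangentLines

section FrobeniusRoots

variable {F : Type*} [Field F]

lemma card_toFinset_roots_eq_natDegree_of_dvd_X_pow_card_sub_X [Fintype F] [DecidableEq F]
    {u : F[X]} (hu : u ∣ .X ^ Fintype.card F - .X) : u.roots.toFinset.card = u.natDegree := by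
  have h0 := FiniteField.X_pow_card_sub_X_ne_zero F (Fintype.one_lt_card (α := F))
  have hsplits : (.X ^ Fintype.card F - .X : F[X]).Splits := by
    rw [Polynomial.splits_iff_card_roots, FiniteField.roots_X_pow_card_sub_X,
      FiniteField.X_pow_card_sub_X_natDegree_eq F Fintype.one_lt_card]
    rfl
  have hnodup : u.roots.Nodup := by
    refine Multiset.nodup_of_le (Polynomial.roots.le_of_dvd h0 hu) ?_
    rw [FiniteField.roots_X_pow_card_sub_X]
    exact Finset.univ.nodup
  rw [Multiset.toFinset_card_of_nodup hnodup,
    Polynomial.splits_iff_card_roots.mp (hsplits.of_dvd h0 hu)]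

-- The cofactor of `gcd(p, p')` in `p` divides `X^Q - X`, so its roots are simple and rational.
lemma natDegree_le_natDegree_gcd_derivative_add_card_roots [Fintype F] [DecidableEq F] {p : F[X]}
    (hp : p ≠ 0) (hdvd : p ∣ (.X ^ Fintype.card F - .X) * p.derivative) :
    p.natDegree ≤ (EuclideanDomain.gcd p p.derivative).natDegree + p.roots.toFinset.card := by
  have hh0 : EuclideanDomain.gcd p p.derivative ≠ 0 := fun h =>
    hp (EuclideanDomain.gcd_eq_zero_iff.mp h).1
  obtain ⟨u, hu⟩ := EuclideanDomain.gcd_dvd_left p p.derivative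
  obtain ⟨w, hw⟩ := EuclideanDomain.gcd_dvd_right p p.derivative
  have hcop : IsCoprime u w := by
    refine ⟨EuclideanDomain.gcdA p p.derivative, EuclideanDomain.gcdB p p.derivative,
      mul_left_cancel₀ hh0 ?_⟩
    linear_combination -(EuclideanDomain.gcd_eq_gcd_ab p p.derivative) -
      EuclideanDomain.gcdA p p.derivative * hu - EuclideanDomain.gcdB p p.derivative * hw
  have hu_dvd : u ∣ .X ^ Fintype.card F - .X := by
    obtain ⟨c, hc⟩ := hdvd
    refine hcop.dvd_of_dvd_mul_right ⟨c, mul_left_cancel₀ hh0 ?_⟩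
    linear_combination hc - (.X ^ Fintype.card F - .X) * hw + c * hu
  have hroots : u.roots.toFinset ⊆ p.roots.toFinset :=
    Multiset.toFinset_subset.mpr
      (Multiset.subset_of_le (Polynomial.roots.le_of_dvd hp ⟨_, hu.trans (mul_comm _ _)⟩))
  calc p.natDegree = (EuclideanDomain.gcd p p.derivative).natDegree + u.natDegree := by
        conv_lhs => rw [hu, Polynomial.natDegree_mul hh0 (right_ne_zero_of_mul (hu ▸ hp))]
    _ ≤ _ := by
        rw [← card_toFinset_roots_eq_natDegree_of_dvd_X_pow_card_sub_X hu_dvd]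
        gcongr

end FrobeniusRoots

section Pencil

variable {F V : Type*} [Field F] [AddCommGroup V] [Module F V]

variable (F) in
/-- The lines through `P` in the projective space of `V`, encoded as the points of the projective
space of `V ⧸ F ∙ P`. -/
abbrev Pencil (P : V) : Type _ := Projectivization F (V ⧸ F ∙ P)

/-- A vector representing a point other than `P` on the line `ℓ` through `P`. -/
noncomputable def pencilBase (P : V) (ℓ : Pencil F P) : V :=
  Function.surjInv (F ∙ P).mkQ_surjective ℓ.rep

lemma mkQ_pencilBase (P : V) (ℓ : Pencil F P) :
    (F ∙ P).mkQ (pencilBase P ℓ) = ℓ.rep :=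
  Function.surjInv_eq _ _

lemma mkQ_span_singleton_self (P : V) : (F ∙ P).mkQ P = 0 := by
  simp

lemma mkQ_pencilBase_add_smul (P : V) (ℓ : Pencil F P) (t : F) :
    (F ∙ P).mkQ (pencilBase P ℓ + t • P) = ℓ.rep := by
  rw [map_add, map_smul, mkQ_span_singleton_self, smul_zero, add_zero, mkQ_pencilBase]

lemma pencilBase_add_smul_ne_zero (P : V) (ℓ : Pencil F P) (t : F) :
    pencilBase P ℓ + t • P ≠ 0 := fun h =>
  ℓ.rep_nonzero (by rw [← mkQ_pencilBase_add_smul P ℓ t, h, map_zero])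

lemma linearIndependent_pencilBase {P : V} (hP : P ≠ 0) (ℓ : Pencil F P) :
    LinearIndependent F ![pencilBase P ℓ, P] := by
  refine LinearIndependent.pair_iff.mpr fun s t hst => ?_
  have hs : s = 0 := by
    have hmk := congrArg (F ∙ P).mkQ hst
    rw [map_add, map_smul, map_smul, mkQ_pencilBase, mkQ_span_singleton_self, smul_zero, add_zero,
      map_zero] at hmk
    exact (smul_eq_zero.mp hmk).resolve_right ℓ.rep_nonzero
  rw [hs, zero_smul, zero_add] at hst
  exact ⟨hs, (smul_eq_zero.mp hst).resolve_right hP⟩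

lemma mk_pencilBase_add_smul_injective {P : V} (hP : P ≠ 0) :
    Function.Injective fun x : Pencil F P × F => Projectivization.mk F
      (pencilBase P x.1 + x.2 • P) (pencilBase_add_smul_ne_zero P x.1 x.2) := by
  rintro ⟨ℓ, t⟩ ⟨ℓ', t'⟩ heq
  obtain ⟨c, hc⟩ := (Projectivization.mk_eq_mk_iff' _ _ _ _ _).mp heq
  have hmk : c • ℓ'.rep = ℓ.rep := by
    rw [← mkQ_pencilBase_add_smul P ℓ' t', ← map_smul, hc, mkQ_pencilBase_add_smul]
  obtain rfl : ℓ = ℓ' := by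
    rw [← ℓ.mk_rep, ← ℓ'.mk_rep]
    exact (Projectivization.mk_eq_mk_iff' _ _ _ _ _).mpr ⟨c, hmk⟩
  have hc1 : c = 1 := smul_left_injective F ℓ.rep_nonzero (by simpa using hmk)
  rw [hc1, one_smul] at hc
  rw [show t' = t from smul_left_injective F hP (add_left_cancel hc)]

lemma card_pencil [Finite F] (hV : finrank F V = 3) {P : V} (hP : P ≠ 0) :
    Nat.card (Pencil F P) = Nat.card F + 1 := by
  have := Module.finite_of_finrank_eq_succ hV
  refine Projectivization.card_of_finrank_two F _ ?_
  have hquot := (F ∙ P).finrank_quotient_add_finrank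
  rw [finrank_span_singleton hP] at hquot
  omega

lemma separatedByForms_pencil {σ : Type*} [Finite σ] (P : σ → F) (h : Pencil F P → F[X]) :
    SeparatedByForms (pencilBase P) (fun _ => P) h 1 := fun ℓ ℓ' hne => by
  classical
  have := Fintype.ofFinite σ
  obtain ⟨φ, hφ', hφ⟩ := exists_dual_rep_eq_zero_of_ne hne
  have hres : ∀ m, restrictLine (pencilBase P m) P (linearForm (φ ∘ₗ (F ∙ P).mkQ)) = .C (φ m.rep) :=
    fun m => by
      rw [restrictLine_linearForm, LinearMap.comp_apply, LinearMap.comp_apply, mkQ_pencilBase,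
        mkQ_span_singleton_self]
      simp
  refine ⟨linearForm (φ ∘ₗ (F ∙ P).mkQ), isHomogeneous_linearForm _, ?_, ?_⟩
  · rw [hres, hφ', map_zero]
    exact dvd_zero _
  · rw [hres]
    exact isCoprime_one_right.of_isCoprime_of_dvd_right (Polynomial.isUnit_C.mpr hφ.isUnit).dvd

lemma sum_natDegree_gcd_derivative_pencil_le [DecidableEq F] {d : ℕ}
    {f : MvPolynomial (Fin 3) F} {P : Fin 3 → F} [Fintype (Pencil F P)] (hd : (d : F) ≠ 0)
    (hf : f.IsHomogeneous d) (hirr : Irreducible f) (hP : eval P f ≠ 0) :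
    ∑ ℓ : Pencil F P, (EuclideanDomain.gcd (restrictLine (pencilBase P ℓ) P f)
      (restrictLine (pencilBase P ℓ) P f).derivative).natDegree ≤ d * (d - 1) := by
  have hd0 : d ≠ 0 := fun h => hd (by rw [h, Nat.cast_zero])
  have hpolar : polar P f ≠ 0 := fun h => mul_ne_zero hd hP (by
    rw [← eval_polar_self hf, h, map_zero])
  have hP0 : P ≠ 0 := ne_zero_of_isHomogeneous_of_eval_ne_zero hf hd0 hP
  refine (separatedByForms_pencil P _).sum_natDegree_le_mul (linearIndependent_pencilBase hP0)
    (fun ℓ h => hP ?_) hf (isHomogeneous_polar hf P) hirr.ne_zero hpolar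
    (hirr.isRelPrime_iff_not_dvd.mpr (not_dvd_polar hf hd0 hpolar))
    (fun _ => EuclideanDomain.gcd_dvd_left _ _) fun ℓ => ?_
  · rw [← coeff_restrictLine hf (pencilBase P ℓ), (EuclideanDomain.gcd_eq_zero_iff.mp h).1,
      Polynomial.coeff_zero]
  · rw [← derivative_restrictLine]
    exact EuclideanDomain.gcd_dvd_right _ _

end Pencil

section RationalPoints

variable {F : Type} [Field F] {n d : ℕ} {f : MvPolynomial (Fin n) F}

lemma mk_mem_hypersurfacePts (hf : f.IsHomogeneous d) {v : Fin n → F} (hv : v ≠ 0)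
    (hfv : eval v f = 0) : Projectivization.mk F v hv ∈ hypersurfacePts f := by
  obtain ⟨c, hc⟩ := Projectivization.exists_smul_eq_mk_rep F v hv
  rw [hypersurfacePts, Set.mem_ofPred_eq, ← hc, Units.smul_def, eval_smul_of_isHomogeneous hf, hfv,
    mul_zero]

lemma exists_eval_ne_zero_of_ncard_lt_card
    (h : (hypersurfacePts f).ncard < Nat.card (Projectivization F (Fin n → F))) :
    ∃ P, eval P f ≠ 0 := by
  by_contra! hf
  have huniv : hypersurfacePts f = Set.univ := Set.eq_univ_of_forall fun P => hf P.rep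
  rw [huniv, Set.ncard_univ] at h
  exact h.false

lemma sum_card_roots_restrictLine_pencil_le_ncard [Finite F] [DecidableEq F]
    (hf : f.IsHomogeneous d) {P : Fin n → F} (hP : P ≠ 0) (s : Finset (Pencil F P)) :
    ∑ ℓ ∈ s, (restrictLine (pencilBase P ℓ) P f).roots.toFinset.card ≤
      (hypersurfacePts f).ncard := by
  rw [← Finset.card_sigma, ← Set.ncard_coe_finset]
  refine Set.ncard_le_ncard_of_injOn
    (fun x => Projectivization.mk F (pencilBase P x.1 + x.2 • P)
      (pencilBase_add_smul_ne_zero P x.1 x.2)) ?_ ?_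
  · rintro ⟨ℓ, t⟩ hx
    have ht := Polynomial.isRoot_of_mem_roots (Multiset.mem_toFinset.mp (Finset.mem_sigma.mp hx).2)
    exact mk_mem_hypersurfacePts hf _ ((eval_restrictLine _ _ _ _).symm.trans ht)
  · rintro ⟨ℓ, t⟩ - ⟨ℓ', t'⟩ - heq
    obtain ⟨rfl, rfl⟩ := Prod.mk.inj (mk_pencilBase_add_smul_injective hP
      (a₁ := (ℓ, t)) (a₂ := (ℓ', t')) heq)
    rfl

lemma two_mul_ncard_hypersurfacePts_le_of_not_dvd [Fintype F] {f : MvPolynomial (Fin 3) F}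
    (hf : f.IsHomogeneous d) (hirr : Irreducible f)
    (hfg : ¬ f ∣ frobeniusPolar (Fintype.card F) f) :
    2 * (hypersurfacePts f).ncard ≤ d * (Fintype.card F + (d - 1)) := by
  have := Fintype.ofFinite (hypersurfacePts f)
  choose B hB hfB using fun P : hypersurfacePts f =>
    exists_linearIndependent_X_sq_dvd_restrictLine (by simp) P.1.rep_nonzero P.2
  have hbezout := (separatedByForms_rep_X_sq Subtype.val_injective B).sum_natDegree_le_mul hB
    (fun _ => pow_ne_zero 2 Polynomial.X_ne_zero) hf (isHomogeneous_frobeniusPolar hf _)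
    hirr.ne_zero (fun h => hfg (h ▸ dvd_zero f)) (hirr.isRelPrime_iff_not_dvd.mpr hfg) hfB
    fun P => X_sq_dvd_restrictLine_frobeniusPolar hf (hfB P)
  rw [← Nat.card_coe_set_eq, Nat.card_eq_fintype_card, mul_comm 2]
  simpa using hbezout

lemma mul_card_add_one_le_ncard_hypersurfacePts_add_of_dvd [Fintype F]
    {f : MvPolynomial (Fin 3) F} {P : Fin 3 → F} (hd : (d : F) ≠ 0) (hf : f.IsHomogeneous d)
    (hirr : Irreducible f) (hfg : f ∣ frobeniusPolar (Fintype.card F) f) (hP : eval P f ≠ 0) :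
    d * (Fintype.card F + 1) ≤ (hypersurfacePts f).ncard + d * (d - 1) := by
  classical
  have hd0 : d ≠ 0 := fun h => hd (by rw [h, Nat.cast_zero])
  have hP0 : P ≠ 0 := ne_zero_of_isHomogeneous_of_eval_ne_zero hf hd0 hP
  have := Fintype.ofFinite (Pencil F P)
  let p (ℓ : Pencil F P) := restrictLine (pencilBase P ℓ) P f
  have hcoeff : ∀ ℓ, (p ℓ).coeff d ≠ 0 := fun ℓ => by rwa [coeff_restrictLine hf]
  have hdvd : ∀ ℓ, p ℓ ∣ (.X ^ Fintype.card F - .X) * (p ℓ).derivative := fun ℓ => by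
    have hres := map_dvd (restrictLine (pencilBase P ℓ) P) hfg
    rw [restrictLine_frobeniusPolar hf] at hres
    exact (dvd_add_right (dvd_smul_of_dvd d dvd_rfl)).mp hres
  have hline : ∀ ℓ, d ≤ (p ℓ).roots.toFinset.card +
      (EuclideanDomain.gcd (p ℓ) (p ℓ).derivative).natDegree := fun ℓ => by
    rw [add_comm]
    exact (Polynomial.le_natDegree_of_ne_zero (hcoeff ℓ)).trans
      (natDegree_le_natDegree_gcd_derivative_add_card_roots
        (fun h => hcoeff ℓ (by rw [h, Polynomial.coeff_zero])) (hdvd ℓ))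
  calc d * (Fintype.card F + 1)
      = ∑ _ℓ : Pencil F P, d := by
        have hpencil := card_pencil (F := F) (finrank_fin_fun F) hP0
        rw [Nat.card_eq_fintype_card, Nat.card_eq_fintype_card] at hpencil
        rw [Finset.sum_const, Finset.card_univ, hpencil, smul_eq_mul, mul_comm]
    _ ≤ ∑ ℓ, ((p ℓ).roots.toFinset.card +
          (EuclideanDomain.gcd (p ℓ) (p ℓ).derivative).natDegree) :=
        Finset.sum_le_sum fun ℓ _ => hline ℓ
    _ ≤ (hypersurfacePts f).ncard + d * (d - 1) := by
        rw [Finset.sum_add_distrib]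
        exact add_le_add (sum_card_roots_restrictLine_pencil_le_ncard hf hP0 _)
          (sum_natDegree_gcd_derivative_pencil_le hd hf hirr hP)

end RationalPoints

theorem stmt_7_general {F : Type} [Field F] [Fintype F] {d : ℕ} (hd : (d : F) ≠ 0)
    {f : MvPolynomial (Fin 3) F} (hf : f.IsHomogeneous d) (hirr : Irreducible f)
    (hlt : ((hypersurfacePts f).ncard : ℚ) < d * (Fintype.card F + 2 - d)) :
    ((hypersurfacePts f).ncard : ℚ) ≤ d * (Fintype.card F + d - 1) / 2 := by
  have hd1 : 1 ≤ d := Nat.one_le_iff_ne_zero.mpr fun h => hd (by rw [h, Nat.cast_zero])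
  by_cases hfg : f ∣ frobeniusPolar (Fintype.card F) f
  · have hncard : (hypersurfacePts f).ncard < Nat.card (Projectivization F (Fin 3 → F)) := by
      rw [Projectivization.card_of_finrank F _ (by simp : finrank F (Fin 3 → F) = 3),
        ← Nat.cast_lt (α := ℚ)]
      simp only [Nat.card_eq_fintype_card, Finset.sum_range_succ, Finset.sum_range_zero]
      push_cast
      nlinarith [sq_nonneg ((Fintype.card F : ℚ) + 2 - 2 * d), sq_nonneg (Fintype.card F : ℚ)]
    obtain ⟨P, hP⟩ := exists_eval_ne_zero_of_ncard_lt_card hncard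
    have hmany := mul_card_add_one_le_ncard_hypersurfacePts_add_of_dvd hd hf hirr hfg hP
    qify [hd1] at hmany
    linarith
  · have hfew := two_mul_ncard_hypersurfacePts_le_of_not_dvd hf hirr hfg
    qify [hd1] at hfew
    linarith

/-- If `q` is a prime power and `C` is an absolutely irreducible plane curve of degree
`q+1` defined over `GF(q²)` whose number `N` of `GF(q²)`-rational points satisfies
`N < q³ + 1`, then `N ≤ q(q+1)²/2`. -/
theorem stmt_7 (q : ℕ) (hq : ∃ p k : ℕ, p.Prime ∧ 0 < k ∧ q = p ^ k)
    (F : Type) [Field F] [Fintype F] (hcardF : Fintype.card F = q ^ 2)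
    (f : MvPolynomial (Fin 3) F) (hfdeg : f.IsHomogeneous (q + 1))
    (habsirr : Irreducible
      (MvPolynomial.map (algebraMap F (AlgebraicClosure F)) f))
    (N : ℕ) (hN : N = (hypersurfacePts f).ncard) (hlt : N < q ^ 3 + 1) :
    (N : ℚ) ≤ (q : ℚ) * ((q : ℚ) + 1) ^ 2 / 2 := by
  have hq0 : (q : F) = 0 := by
    rw [← pow_eq_zero_iff two_ne_zero, ← Nat.cast_pow, ← hcardF, Nat.cast_card_eq_zero]
  have hd : ((q + 1 : ℕ) : F) ≠ 0 := by simp [hq0]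
  have := isLocalHom_mvPolynomial_map (σ := Fin 3) _ (algebraMap F (AlgebraicClosure F)).injective
  have hirr : Irreducible f := habsirr.of_map
  subst hN
  have hcardQ : (Fintype.card F : ℚ) = q ^ 2 := by exact_mod_cast hcardF
  have hltQ : ((hypersurfacePts f).ncard : ℚ) < q ^ 3 + 1 := by exact_mod_cast hlt
  have hbound := stmt_7_general hd hfdeg hirr (by
    rw [hcardQ]
    push_cast
    linarith)
  rw [hcardQ] at hbound
  push_cast at hbound
  linarith
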